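/- arXiv:0902.2039 — 2 statements merged into one kernel-verified Lean document; each statement's English description precedes it below -/
import Mathlib

section
/- Let $A$ be a Dedekind ring whose residue field at every maximal ideal is an algebraic extension of a finite field, and let $m \ge 1$ be an integer. If $T$ is a finite set of closed points of the projective space $\mathbb{P}^m_A$, then there exist an integer $n \ge 1$ and a homogeneous polynomial $f = f(x_0, \ldots, x_m)$ of degree $n$ in the homogeneous coordinates of $\mathbb{P}^m_A$ such that $f$ does not vanish at any point of $T$. -/
/-!
This is homogeneous prime avoidance inside the irrelevant ideal, whose nonzero homogeneous elements
have positive degree. Suppose a homogeneous `f` avoids all the primes but `P`. If `f ∉ P` there is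
nothing to do. Otherwise choose a homogeneous `g ∉ P` lying in every other prime `Q`, except those
`Q` all of whose homogeneous elements lie in `P`, and replace `f` by `h = f ^ e + g ^ n`, where
`e = deg g` and `n = deg f` make both terms of degree `e * n`. Then `h ∉ P`, and `h` avoids the
exceptional primes because it is homogeneous, so that `h ∈ Q` would give `h ∈ P`. At each of the
other primes `g` vanishes and `f` does not.
-/

open AlgebraicGeometry CategoryTheory TopologicalSpace

noncomputable section

universe u

/-- A field is an algebraic extension of a finite field iff the subring generated by each of
its elements is finite (this forces positive characteristic and algebraicity over the prime
field). -/
def IsAlgebraicExtensionOfFiniteField (k : Type u) [Field k] : Prop :=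
  ∀ x : k, ((Subring.closure {x} : Subring k) : Set k).Finite

attribute [local instance] MvPolynomial.gradedAlgebra

section HomogeneousElements

variable {ι R S : Type*} [DecidableEq ι] [SetLike S R]

section Semiring

variable [Semiring R] [AddSubmonoidClass S R]

theorem exists_homogeneous_mem_notMem [AddMonoid ι] {𝒜 : ι → S} [GradedRing 𝒜] {I J : Ideal R}
    (hI : I.IsHomogeneous 𝒜) (hIJ : ¬ I ≤ J) : ∃ i, ∃ f ∈ 𝒜 i, f ∈ I ∧ f ∉ J := by
  classical
  obtain ⟨x, hxI, hxJ⟩ := SetLike.not_le_iff_exists.mp hIJ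
  by_contra! h
  apply hxJ
  rw [← DirectSum.sum_support_decompose 𝒜 x]
  exact J.sum_mem fun i _ ↦ h i _ (SetLike.coe_mem _) (hI i hxI)

theorem mem_of_homogeneousCore_le [AddMonoid ι] {𝒜 : ι → S} [GradedRing 𝒜] {I J : Ideal R}
    (h : (I.homogeneousCore 𝒜).toIdeal ≤ J) {i : ι} {f : R} (hf : f ∈ 𝒜 i) (hfI : f ∈ I) :
    f ∈ J :=
  h (Ideal.mem_homogeneousCore_of_homogeneous_of_mem ⟨i, hf⟩ hfI)

theorem pos_of_mem_irrelevant [AddCommMonoid ι] [PartialOrder ι] [CanonicallyOrderedAdd ι]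
    {𝒜 : ι → S} [GradedRing 𝒜] {i : ι} {f : R} (hf : f ∈ 𝒜 i)
    (hirr : f ∈ HomogeneousIdeal.irrelevant 𝒜) (hf0 : f ≠ 0) : 0 < i := by
  refine pos_iff_ne_zero.mpr ?_
  rintro rfl
  rw [HomogeneousIdeal.mem_irrelevant_iff, GradedRing.proj_apply,
    DirectSum.decompose_of_mem_same 𝒜 hf] at hirr
  exact hf0 hirr

end Semiring

theorem exists_homogeneous_mem_forall_mem_notMem [CommSemiring R] [AddSubmonoidClass S R]
    [AddMonoid ι] {𝒜 : ι → S} [GradedRing 𝒜] {κ : Type*} {I P : Ideal R}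
    (hI : I.IsHomogeneous 𝒜) (hP : P.IsPrime) (hIP : ¬ I ≤ P) {s : Finset κ} {Q : κ → Ideal R}
    (hQ : ∀ k ∈ s, (Q k).IsHomogeneous 𝒜) (hQP : ∀ k ∈ s, ¬ Q k ≤ P) :
    ∃ i, ∃ f ∈ 𝒜 i, f ∈ I ∧ (∀ k ∈ s, f ∈ Q k) ∧ f ∉ P := by
  have hhom : (I ⊓ s.inf Q).IsHomogeneous 𝒜 := by
    rw [Finset.inf_eq_iInf]
    exact hI.inf (.iInf₂ hQ)
  have hle : ¬ I ⊓ s.inf Q ≤ P := by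
    rw [hP.inf_le, hP.inf_le']
    rintro (h | ⟨k, hk, h⟩)
    exacts [hIP h, hQP k hk h]
  obtain ⟨i, f, hf, ⟨hfI, hfQ⟩, hfP⟩ := exists_homogeneous_mem_notMem hhom hle
  exact ⟨i, f, hf, hfI, fun k hk ↦ Finset.inf_le (f := Q) hk hfQ, hfP⟩

end HomogeneousElements

theorem pow_add_pow_notMem {R : Type*} [CommRing R] {P : Ideal R} (hP : P.IsPrime) {f g : R}
    (hf : f ∈ P) (hg : g ∉ P) {e : ℕ} (he : 0 < e) (n : ℕ) : f ^ e + g ^ n ∉ P := by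
  rw [P.add_mem_iff_right (P.pow_mem_of_mem hf e he)]
  exact fun h ↦ hg (hP.mem_of_pow_mem n h)

section PrimeAvoidance

variable {R S : Type*} [CommRing R] [SetLike S R] [AddSubmonoidClass S R]
  {𝒜 : ℕ → S} [GradedRing 𝒜]

theorem exists_homogeneous_pos_forall_notMem_of_isPrime {κ : Type*} {I : Ideal R}
    (hI : I.IsHomogeneous 𝒜) (hirr : I ≤ (HomogeneousIdeal.irrelevant 𝒜).toIdeal) {s : Finset κ}
    {P : κ → Ideal R} (hP : ∀ k ∈ s, (P k).IsPrime) (hIP : ∀ k ∈ s, ¬ I ≤ P k) :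
    ∃ n, 0 < n ∧ ∃ f ∈ 𝒜 n, f ∈ I ∧ ∀ k ∈ s, f ∉ P k := by
  classical
  induction s using Finset.induction_on with
  | empty => exact ⟨1, one_pos, 0, zero_mem _, zero_mem _, by simp⟩
  | insert a s _ ih =>
    simp only [Finset.forall_mem_insert] at hP hIP ⊢
    obtain ⟨hPa, hPs⟩ := hP
    obtain ⟨hIPa, hIPs⟩ := hIP
    obtain ⟨n, hn, f, hf, hfI, hfs⟩ := ih hPs hIPs
    by_cases! hfa : f ∉ P a
    · exact ⟨n, hn, f, hf, hfI, hfa, hfs⟩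
    obtain ⟨e, g, hg, hgI, hgs, hga⟩ := exists_homogeneous_mem_forall_mem_notMem hI hPa hIPa
      (s := {k ∈ s | ¬ ((P k).homogeneousCore 𝒜).toIdeal ≤ P a})
      (fun k _ ↦ ((P k).homogeneousCore 𝒜).isHomogeneous) fun k hk ↦ (Finset.mem_filter.mp hk).2
    have he : 0 < e := pos_of_mem_irrelevant hg (hirr hgI) fun h ↦ hga (h ▸ zero_mem _)
    have hdeg : f ^ e + g ^ n ∈ 𝒜 (e * n) :=
      add_mem (SetLike.pow_mem_graded e hf) (Nat.mul_comm e n ▸ SetLike.pow_mem_graded n hg)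
    have hI' : f ^ e + g ^ n ∈ I :=
      add_mem (I.pow_mem_of_mem hfI e he) (I.pow_mem_of_mem hgI n hn)
    have hPa' : f ^ e + g ^ n ∉ P a := pow_add_pow_notMem hPa hfa hga he n
    refine ⟨e * n, Nat.mul_pos he hn, f ^ e + g ^ n, hdeg, hI', hPa', fun k hk ↦ ?_⟩
    by_cases hka : ((P k).homogeneousCore 𝒜).toIdeal ≤ P a
    · exact fun h ↦ hPa' (mem_of_homogeneousCore_le hka hdeg h)
    · have hgk : g ∈ P k :=
        Ideal.toIdeal_homogeneousCore_le 𝒜 _ (hgs k (Finset.mem_filter.mpr ⟨hk, hka⟩))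
      rw [add_comm]
      exact pow_add_pow_notMem (hPs k hk) hgk (hfs k hk) hn e

theorem exists_homogeneous_pos_forall_notMem_of_finite {T : Set (ProjectiveSpectrum 𝒜)}
    (hT : T.Finite) : ∃ n, 0 < n ∧ ∃ f ∈ 𝒜 n, ∀ p ∈ T, f ∉ p.asHomogeneousIdeal := by
  obtain ⟨n, hn, f, hf, -, hfT⟩ := exists_homogeneous_pos_forall_notMem_of_isPrime
    (HomogeneousIdeal.irrelevant 𝒜).isHomogeneous le_rfl (s := hT.toFinset)
    (P := fun p ↦ p.asHomogeneousIdeal.toIdeal) (fun p _ ↦ p.isPrime)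
    fun p _ ↦ p.not_irrelevant_le
  exact ⟨n, hn, f, hf, fun p hp ↦ hfT p (hT.mem_toFinset.mpr hp)⟩

end PrimeAvoidance

theorem exists_homogeneous_not_vanishing_on_closed_points_general {A σ : Type*} [CommRing A]
    [Nontrivial A] [Nonempty σ]
    {T : Set (ProjectiveSpectrum (MvPolynomial.homogeneousSubmodule σ A))} (hT : T.Finite) :
    ∃ n : ℕ, 1 ≤ n ∧ ∃ F : MvPolynomial σ A, F ∈ MvPolynomial.homogeneousSubmodule σ A n ∧
      F ≠ 0 ∧ ∀ p ∈ T, F ∉ p.asHomogeneousIdeal := by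
  rcases T.eq_empty_or_nonempty with rfl | ⟨p, hp⟩
  · obtain ⟨i⟩ := ‹Nonempty σ›
    exact ⟨1, le_rfl, MvPolynomial.X i, MvPolynomial.isHomogeneous_X A i,
      MvPolynomial.X_ne_zero i, by simp⟩
  · obtain ⟨n, hn, F, hF, hFT⟩ := exists_homogeneous_pos_forall_notMem_of_finite hT
    exact ⟨n, hn, F, hF, fun h ↦ hFT p hp (h ▸ zero_mem _), hFT⟩

/-- **Lemma 3.5.**  Let `A` be a Dedekind ring whose residue field at every maximal ideal is
an algebraic extension of a finite field, and let `m ≥ 1`.  If `T` is a finite set of closed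
points of `ℙ^m_A = Proj A[x_0, …, x_m]`, then there are an integer `n ≥ 1` and a homogeneous
polynomial `F` of degree `n` in the homogeneous coordinates of `ℙ^m_A` which does not vanish
at any point of `T`. -/
theorem exists_homogeneous_not_vanishing_on_closed_points
    (A : Type u) [CommRing A] [IsDomain A] [IsDedekindDomain A]
    (hres : ∀ (q : Ideal A) [q.IsMaximal],
      letI := Ideal.Quotient.field q
      IsAlgebraicExtensionOfFiniteField (A ⧸ q))
    (m : ℕ) (hm : 1 ≤ m)
    (T : Set (ProjectiveSpectrum (MvPolynomial.homogeneousSubmodule (Fin (m + 1)) A)))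
    (hTfin : T.Finite)
    (hTclosed : ∀ p ∈ T,
      IsClosed ({p} : Set (ProjectiveSpectrum (MvPolynomial.homogeneousSubmodule (Fin (m + 1)) A)))) :
    ∃ (n : ℕ), 1 ≤ n ∧
      ∃ F : MvPolynomial (Fin (m + 1)) A,
        F ∈ MvPolynomial.homogeneousSubmodule (Fin (m + 1)) A n ∧ F ≠ 0 ∧
        ∀ p ∈ T, F ∉ p.asHomogeneousIdeal :=
  exists_homogeneous_not_vanishing_on_closed_points_general hTfin

end
end

section
/- Suppose $W = (w_{i,j})_{1 \le i,j \le t}$ is a $t \times t$ square matrix of rational numbers such that every diagonal entry $w_{i,i}$ is negative, every off-diagonal entry $w_{i,j}$ (for $i \ne j$) is positive, and the sum of the entries in each row is $0$. Then there exist positive rational numbers $a_1, \ldots, a_t$ such that $\sum_{i=1}^{t} a_i \, w_{i,j} = 0$ for every $j$ with $1 \le j \le t$; that is, some positive rational linear combination of the rows of $W$ is the zero vector. -/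
/-! Let `w` be a positive column vector with `W w = 0`; when the rows sum to `0`, take all entries
of `w` equal to `1`. Then `W` is singular, so it also has a nonzero left null vector `v`. As `W` is
nonnegative off the diagonal, the triangle inequality in each column gives `0 ≤ |v| W`; but
`(|v| W) w = 0`, so `|v|` is a left null vector too. Finally, `0 < |v i|` and `0 < W i j` imply
`0 < |v j|`: otherwise no negative term would be left in column `j` to balance `|v i| * W i j`.
Positivity thus spreads from one index to all the others along the positive entries of `W`. -/

section

open Matrix

variable {n R : Type*} [Fintype n] {W : Matrix n n R} {u v w : n → R}

lemma exists_vecMul_eq_zero_iff_exists_mulVec_eq_zero [CommRing R] [IsDomain R] :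
    (∃ v ≠ 0, v ᵥ* W = 0) ↔ ∃ w ≠ 0, W *ᵥ w = 0 := by
  classical exact exists_vecMul_eq_zero_iff.trans exists_mulVec_eq_zero_iff.symm

lemma eq_zero_of_dotProduct_eq_zero_of_pos [Semiring R] [PartialOrder R] [IsStrictOrderedRing R]
    (hu : 0 ≤ u) (hw : ∀ i, 0 < w i) (h : u ⬝ᵥ w = 0) : u = 0 := by
  have hterm := (Finset.sum_eq_zero_iff_of_nonneg fun i _ => mul_nonneg (hu i) (hw i).le).mp h
  ext i
  by_contra hi
  exact (mul_pos ((hu i).lt_of_ne' hi) (hw i)).ne' (hterm i (Finset.mem_univ i))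

lemma abs_vecMul_nonneg_of_vecMul_eq_zero [Ring R] [LinearOrder R] [IsOrderedRing R]
    (hoff : Pairwise fun i j => 0 ≤ W i j) (hv : v ᵥ* W = 0) : 0 ≤ |v| ᵥ* W := by
  intro j
  wlog hj : 0 ≤ v j generalizing v
  · simpa only [abs_neg] using
      this (v := -v) (by rw [neg_vecMul, hv, neg_zero]) (neg_nonneg.mpr (le_of_not_ge hj))
  calc 0 = ∑ i, v i * W i j := (congrFun hv j).symm
    _ ≤ ∑ i, |v i| * W i j := Finset.sum_le_sum fun i _ => by
      obtain rfl | hij := eq_or_ne i j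
      · rw [abs_of_nonneg hj]
      · exact mul_le_mul_of_nonneg_right (le_abs_self _) (hoff hij)

lemma abs_vecMul_eq_zero_of_vecMul_eq_zero [Ring R] [LinearOrder R] [IsStrictOrderedRing R]
    (hoff : Pairwise fun i j => 0 ≤ W i j) (hw : ∀ i, 0 < w i)
    (hWw : W *ᵥ w = 0) (hv : v ᵥ* W = 0) : |v| ᵥ* W = 0 :=
  eq_zero_of_dotProduct_eq_zero_of_pos (abs_vecMul_nonneg_of_vecMul_eq_zero hoff hv) hw <| by
    rw [← dotProduct_mulVec, hWw, dotProduct_zero]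

lemma pos_of_vecMul_eq_zero_of_pos [Semiring R] [PartialOrder R] [IsStrictOrderedRing R]
    (hoff : Pairwise fun i j => 0 ≤ W i j) (hu : 0 ≤ u) (huW : u ᵥ* W = 0)
    {i j : n} (hi : 0 < u i) (hij : 0 < W i j) : 0 < u j := by
  refine (hu j).lt_of_ne' fun (hj : u j = 0) => (mul_pos hi hij).ne' ?_
  have hterm : ∀ k ∈ Finset.univ, 0 ≤ u k * W k j := fun k _ => by
    obtain rfl | hkj := eq_or_ne k j
    · rw [hj, zero_mul]
    · exact mul_nonneg (hu k) (hoff hkj)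
  exact (Finset.sum_eq_zero_iff_of_nonneg hterm).mp (congrFun huW j) i (Finset.mem_univ i)

theorem exists_positive_combination_of_rows_eq_zero_general
    [CommRing R] [LinearOrder R] [IsStrictOrderedRing R]
    (hoff : Pairwise fun i j => 0 ≤ W i j)
    (hconn : ∀ i j, Relation.ReflTransGen (fun i j => 0 < W i j) i j)
    (hw : ∀ i, 0 < w i) (hWw : W *ᵥ w = 0) :
    ∃ a : n → R, (∀ i, 0 < a i) ∧ ∀ j, ∑ i, a i * W i j = 0 := by
  obtain hn | ⟨⟨i₀⟩⟩ := isEmpty_or_nonempty n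
  · exact ⟨0, hn.elim, hn.elim⟩
  obtain ⟨v, hv₀, hv⟩ :=
    exists_vecMul_eq_zero_iff_exists_mulVec_eq_zero.mpr
      ⟨w, fun h => (hw i₀).ne' (congrFun h i₀), hWw⟩
  have habs : |v| ᵥ* W = 0 := abs_vecMul_eq_zero_of_vecMul_eq_zero hoff hw hWw hv
  obtain ⟨i, hi⟩ := Function.ne_iff.mp hv₀
  refine ⟨|v|, fun j => ?_, congrFun habs⟩
  induction hconn i j with
  | refl => exact abs_pos.mpr hi
  | tail _ hjk ih => exact pos_of_vecMul_eq_zero_of_pos hoff (abs_nonneg v) habs ih hjk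

end

/-- **Lemma 5.2.**  If `W` is a `t × t` matrix of rational numbers whose diagonal entries
are negative, whose off-diagonal entries are positive, and each of whose rows sums to `0`,
then some positive rational linear combination of the rows of `W` is the zero vector. -/
theorem exists_positive_combination_of_rows_eq_zero
    (t : ℕ) (ht : 0 < t) (W : Matrix (Fin t) (Fin t) ℚ)
    (hdiag : ∀ i, W i i < 0)
    (hoff : ∀ i j, i ≠ j → 0 < W i j)
    (hrow : ∀ i, ∑ j, W i j = 0) :
    ∃ a : Fin t → ℚ, (∀ i, 0 < a i) ∧ ∀ j, ∑ i, a i * W i j = 0 := by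
  refine exists_positive_combination_of_rows_eq_zero_general (w := 1)
    (fun i j hij => (hoff i j hij).le) (fun i j => ?_) (fun _ => one_pos)
    (funext fun i => (dotProduct_one (W i)).trans (hrow i))
  obtain rfl | hij := eq_or_ne i j
  exacts [.refl, .single (hoff i j hij)]
end
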